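/- arXiv:2312.05240 — 2 statements merged into one kernel-verified Lean document; each statement's English description precedes it below -/
import Mathlib

section
/- In the group ring R[P], the product α·β equals 1. -/
open MvPolynomial

noncomputable section

/-- The two relators of the Promislow group `P = ⟨a, b | b⁻¹a²b = a⁻², a⁻¹b²a = b⁻²⟩`,
written as words that equal the identity: `b⁻¹a²ba²` and `a⁻¹b²ab²`. -/
def Prels : Set (FreeGroup (Fin 2)) :=
  {(FreeGroup.of 1)⁻¹ * (FreeGroup.of 0) ^ 2 * (FreeGroup.of 1) * (FreeGroup.of 0) ^ 2,
   (FreeGroup.of 0)⁻¹ * (FreeGroup.of 1) ^ 2 * (FreeGroup.of 0) * (FreeGroup.of 1) ^ 2}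

/-- The Promislow group. -/
abbrev P : Type := PresentedGroup Prels

def pa : P := PresentedGroup.of 0
def pb : P := PresentedGroup.of 1
def px : P := pa ^ 2
def py : P := pb ^ 2
def pz : P := (pa * pb) ^ 2

/-- The ring `R = ℤ[s,t]/⟨s⁴+1, t⁴+1⟩`. -/
abbrev Rr : Type :=
  MvPolynomial (Fin 2) ℤ ⧸
    Ideal.span {(X 0 : MvPolynomial (Fin 2) ℤ) ^ 4 + 1, (X 1 : MvPolynomial (Fin 2) ℤ) ^ 4 + 1}

def s : Rr := Ideal.Quotient.mk _ (X 0)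
def t : Rr := Ideal.Quotient.mk _ (X 1)

/-- The image of a group element in the group ring `R[P]`. -/
def G (g : P) : MonoidAlgebra Rr P := MonoidAlgebra.of Rr P g

def α1 : MonoidAlgebra Rr P :=
  1 + t ^ 2 • G (px * pz⁻¹) - t ^ 2 • G (px⁻¹ * pz⁻¹) - s ^ 2 • G (py * pz⁻¹)
    + s ^ 2 • G (py⁻¹ * pz⁻¹)

def αa : MonoidAlgebra Rr P :=
  -(s ^ 2 • G px⁻¹) + 1 - G (px⁻¹ * py⁻¹ * pz) + s ^ 2 • G (py * pz)

def αb : MonoidAlgebra Rr P :=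
  G (px⁻¹ * py⁻¹ * pz) - t ^ 2 • G (px * pz) + t ^ 2 • G (py⁻¹ * pz ^ 2) - G (pz ^ 2)

def αab : MonoidAlgebra Rr P :=
  -(t ^ 2 • G (px⁻¹ * pz⁻¹)) - s ^ 2 • G (py * pz⁻¹) + (s ^ 2 * t ^ 2) • G pz⁻¹
    + G (px⁻¹ * py * pz⁻¹) + s ^ 2 • G (px⁻¹ * pz⁻¹ ^ 2) + t ^ 2 • G (py * pz⁻¹ ^ 2)
    - G (pz⁻¹ ^ 2) - (s ^ 2 * t ^ 2) • G (px⁻¹ * py * pz⁻¹ ^ 2)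

/-- The unit `α ∈ R[P]`. -/
def αU : MonoidAlgebra Rr P :=
  α1 + s • (αa * G pa) + t • (αb * G pb) + (s * t) • (αab * G (pa * pb))

def β1 : MonoidAlgebra Rr P :=
  1 + t ^ 2 • G (px⁻¹ * pz) - t ^ 2 • G (px * pz) + s ^ 2 • G (py * pz) - s ^ 2 • G (py⁻¹ * pz)

def βa : MonoidAlgebra Rr P :=
  -1 + s ^ 2 • G px⁻¹ - s ^ 2 • G (py * pz) + G (px⁻¹ * py⁻¹ * pz)

def βb : MonoidAlgebra Rr P :=
  -G (px⁻¹ * py⁻¹ * pz) + t ^ 2 • G (px * pz) - t ^ 2 • G (py⁻¹ * pz ^ 2) + G (pz ^ 2)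

def βab : MonoidAlgebra Rr P :=
  (s ^ 2 * t ^ 2) • G (px⁻¹ * py) + 1 - t ^ 2 • G py - s ^ 2 • G px⁻¹
    - G (px⁻¹ * py * pz) - (s ^ 2 * t ^ 2) • G pz + s ^ 2 • G (py * pz) + t ^ 2 • G (px⁻¹ * pz)

/-- The inverse unit `β ∈ R[P]`. -/
def βU : MonoidAlgebra Rr P :=
  β1 + s • (βa * G pa) + t • (βb * G pb) + (s * t) • (βab * G (pa * pb))

/-! The squares `x = a²`, `y = b²`, `z = (ab)²` generate a commutative group which `a` and `b`
normalise, each of them inverting two of the three generators. The group ring is therefore a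
crossed product of commutative Laurent polynomials with the Klein four-group `{1, a, b, ab}`, and
`αβ = 1` amounts to one identity between Laurent polynomials for each of the four cosets. In these
coordinates `β` is read off from `α`: `β₁(x, y, z) = α₁(x⁻¹, y⁻¹, z⁻¹)`, `β_a = -α_a`,
`β_b = -α_b` and `β_{ab} = -z² α_{ab}`. The coset of `1` gives a sum of four twisted norms equal
to `1`; on the other three cosets the cross terms cancel in pairs.
Both facts rest on `s⁴ = t⁴ = -1`.
-/

namespace Promislow

section Group

variable {Γ : Type*} [Group Γ] {a b : Γ}

theorem commute_sq_sq (ha : SemiconjBy a (b ^ 2) (b ^ 2)⁻¹) : Commute (a ^ 2) (b ^ 2) := by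
  simpa [Commute, pow_two a] using ha.inv_right.mul_left ha

theorem semiconjBy_left_mul_sq (ha : SemiconjBy a (b ^ 2) (b ^ 2)⁻¹)
    (hb : SemiconjBy b (a ^ 2) (a ^ 2)⁻¹) : SemiconjBy a ((a * b) ^ 2) ((a * b) ^ 2)⁻¹ := by
  refine eq_inv_mul_iff_mul_eq.2 ?_
  have hb' : b ^ 2 * a = a * (b ^ 2)⁻¹ := by simpa using ha.inv_right.eq.symm
  calc (a * b) ^ 2 * (a * (a * b) ^ 2)
      = a * b * a * (b * a ^ 2) * b * a * b := by simp only [pow_two, mul_assoc]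
    _ = a * b * a * ((a ^ 2)⁻¹ * b) * b * a * b := by rw [hb.eq]
    _ = a * b * a⁻¹ * (b ^ 2 * a) * b := by simp only [pow_two]; group
    _ = a * b * a⁻¹ * (a * (b ^ 2)⁻¹) * b := by rw [hb']
    _ = a := by group

theorem semiconjBy_right_mul_sq (ha : SemiconjBy a (b ^ 2) (b ^ 2)⁻¹)
    (hb : SemiconjBy b (a ^ 2) (a ^ 2)⁻¹) : SemiconjBy b ((a * b) ^ 2) ((a * b) ^ 2)⁻¹ := by
  have hainv : SemiconjBy a⁻¹ ((a * b) ^ 2) ((a * b) ^ 2)⁻¹ := by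
    simpa using (semiconjBy_left_mul_sq ha hb).inv_right.inv_symm_left
  simpa using hainv.mul_left (Commute.self_pow (a * b) 2)

theorem mul_eq_sq_mul_mul (hb : SemiconjBy b (a ^ 2) (a ^ 2)⁻¹) :
    b * a = (a ^ 2)⁻¹ * b ^ 2 * ((a * b) ^ 2)⁻¹ * (a * b) :=
  calc b * a = b * a ^ 2 * a⁻¹ := by group
    _ = (a ^ 2)⁻¹ * b * a⁻¹ := by rw [hb.eq]
    _ = (a ^ 2)⁻¹ * b ^ 2 * ((a * b) ^ 2)⁻¹ * (a * b) := by simp only [pow_two]; group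

theorem commute_left_sq_mul_sq (ha : SemiconjBy a (b ^ 2) (b ^ 2)⁻¹)
    (hb : SemiconjBy b (a ^ 2) (a ^ 2)⁻¹) : Commute (a ^ 2) ((a * b) ^ 2) := by
  have h := semiconjBy_left_mul_sq ha hb
  simpa [Commute, pow_two a] using h.inv_right.mul_left h

theorem commute_right_sq_mul_sq (ha : SemiconjBy a (b ^ 2) (b ^ 2)⁻¹)
    (hb : SemiconjBy b (a ^ 2) (a ^ 2)⁻¹) : Commute (b ^ 2) ((a * b) ^ 2) := by
  have h := semiconjBy_right_mul_sq ha hb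
  simpa [Commute, pow_two b] using h.inv_right.mul_left h

end Group

section Laurent

variable {A : Type*} [CommRing A] (s t : A) (x y z : Aˣ)

/-- The Laurent polynomial `α₁`, with `s`, `t` ring elements and `x`, `y`, `z` units. -/
def coeffOne : A := 1 + ↑z⁻¹ * (t ^ 2 * (x - ↑x⁻¹) - s ^ 2 * (y - ↑y⁻¹))

/-- The Laurent polynomial `α_a`. -/
def coeffA : A := 1 - s ^ 2 * ↑x⁻¹ - ↑x⁻¹ * ↑y⁻¹ * z + s ^ 2 * y * z

/-- The Laurent polynomial `α_b`. -/
def coeffB : A := ↑x⁻¹ * ↑y⁻¹ * z - t ^ 2 * x * z + t ^ 2 * ↑y⁻¹ * z ^ 2 - z ^ 2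

/-- The Laurent polynomial `α_{ab}`, with its terms in `z⁻¹` and in `z⁻²` each factored. -/
def coeffAB : A :=
  ↑z⁻¹ * (↑x⁻¹ - s ^ 2) * (y - t ^ 2) - ↑z⁻¹ ^ 2 * (1 - s ^ 2 * ↑x⁻¹) * (1 - t ^ 2 * y)

theorem coeffOne_mul_coeffOne_inv : coeffOne s t x y z * coeffOne s t x⁻¹ y⁻¹ z⁻¹ =
    1 - (t ^ 2 * (x - ↑x⁻¹) - s ^ 2 * (y - ↑y⁻¹)) ^ 2
      - (z - ↑z⁻¹) * (t ^ 2 * (x - ↑x⁻¹) - s ^ 2 * (y - ↑y⁻¹)) := by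
  have hz := z.mul_inv
  simp only [coeffOne, inv_inv]
  grind

theorem coeffOne_inv_left_sub : coeffOne s t x⁻¹ y z - coeffOne s t x y z =
    -2 * t ^ 2 * ↑z⁻¹ * (x - ↑x⁻¹) := by
  simp only [coeffOne, inv_inv]
  ring

theorem coeffOne_inv_right_sub : coeffOne s t x y⁻¹ z - coeffOne s t x y z =
    2 * s ^ 2 * ↑z⁻¹ * (y - ↑y⁻¹) := by
  simp only [coeffOne, inv_inv]
  ring

variable {s t}

-- Conjugation by `a`, `b`, `ab` sends `(x, y, z)` to `(x, y⁻¹, z⁻¹)`, `(x⁻¹, y, z⁻¹)`,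
-- `(x⁻¹, y⁻¹, z)`: this explains the inverted arguments in the following identities.
theorem coeffA_norm (hs : s ^ 4 = -1) :
    s ^ 2 * x * coeffA s x y z * coeffA s x y⁻¹ z⁻¹ =
      (y + ↑y⁻¹) ^ 2 + s ^ 2 * (z - ↑z⁻¹) * (y - ↑y⁻¹)
        - z * (x * y + ↑x⁻¹ * ↑y⁻¹) - ↑z⁻¹ * (x * ↑y⁻¹ + ↑x⁻¹ * y) := by
  have hx := x.mul_inv
  have hy := y.mul_inv
  have hz := z.mul_inv
  simp only [coeffA, inv_inv]
  grind

theorem coeffB_norm (ht : t ^ 4 = -1) :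
    t ^ 2 * y * coeffB t x y z * coeffB t x⁻¹ y z⁻¹ =
      (x + ↑x⁻¹) ^ 2 - t ^ 2 * (z - ↑z⁻¹) * (x - ↑x⁻¹)
        - z * (x * ↑y⁻¹ + ↑x⁻¹ * y) - ↑z⁻¹ * (x * y + ↑x⁻¹ * ↑y⁻¹) := by
  have hx := x.mul_inv
  have hy := y.mul_inv
  have hz := z.mul_inv
  simp only [coeffB, inv_inv]
  grind

theorem coeffAB_norm (hs : s ^ 4 = -1) (ht : t ^ 4 = -1) :
    s ^ 2 * t ^ 2 * z ^ 3 * coeffAB s t x y z * coeffAB s t x⁻¹ y⁻¹ z =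
      2 * s ^ 2 * t ^ 2 * (x - ↑x⁻¹) * (y - ↑y⁻¹) - 8
        + (z + ↑z⁻¹) * (x + ↑x⁻¹) * (y + ↑y⁻¹) := by
  have hx := x.mul_inv
  have hy := y.mul_inv
  have hz := z.mul_inv
  simp only [coeffAB, inv_inv]
  grind

theorem coeffB_coeffAB_cross (s : A) (x y z : Aˣ) (ht : t ^ 4 = -1) :
    ↑x⁻¹ * ↑z⁻¹ ^ 3 * coeffB t x y z * coeffAB s t x⁻¹ y z⁻¹
        + ↑y⁻¹ * coeffAB s t x y z * coeffB t x⁻¹ y⁻¹ z =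
      -2 * ↑z⁻¹ * (x - ↑x⁻¹) * coeffA s x y z := by
  have hx := x.mul_inv
  have hy := y.mul_inv
  have hz := z.mul_inv
  simp only [coeffA, coeffB, coeffAB, inv_inv]
  grind

theorem coeffA_coeffAB_cross (t : A) (x y z : Aˣ) (hs : s ^ 4 = -1) :
    x * ↑z⁻¹ ^ 2 * coeffA s x y z * coeffAB s t x y⁻¹ z⁻¹
        + ↑y⁻¹ * z * coeffAB s t x y z * coeffA s x⁻¹ y⁻¹ z =
      2 * ↑z⁻¹ * (y - ↑y⁻¹) * coeffB t x y z := by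
  have hx := x.mul_inv
  have hy := y.mul_inv
  have hz := z.mul_inv
  simp only [coeffA, coeffB, coeffAB, inv_inv]
  grind

theorem coeffA_coeffB_cross (hs : s ^ 4 = -1) (ht : t ^ 4 = -1) :
    coeffA s x y z * coeffB t x y⁻¹ z⁻¹
        + ↑x⁻¹ * y * ↑z⁻¹ * coeffB t x y z * coeffA s x⁻¹ y z⁻¹ =
      coeffAB s t x y z * (coeffOne s t x y z⁻¹ - z ^ 2 * coeffOne s t x y z) := by
  have hx := x.mul_inv
  have hy := y.mul_inv
  have hz := z.mul_inv
  simp only [coeffOne, coeffA, coeffB, coeffAB, inv_inv]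
  grind

theorem coeffOne_mul_coeffOne_inv_sub_norms (hs : s ^ 4 = -1) (ht : t ^ 4 = -1) :
    coeffOne s t x y z * coeffOne s t x⁻¹ y⁻¹ z⁻¹
      - s ^ 2 * x * coeffA s x y z * coeffA s x y⁻¹ z⁻¹
      - t ^ 2 * y * coeffB t x y z * coeffB t x⁻¹ y z⁻¹
      - s ^ 2 * t ^ 2 * z ^ 3 * coeffAB s t x y z * coeffAB s t x⁻¹ y⁻¹ z = 1 := by
  rw [coeffOne_mul_coeffOne_inv, coeffA_norm x y z hs, coeffB_norm x y z ht,
    coeffAB_norm x y z hs ht]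
  linear_combination -(↑x - ↑x⁻¹ : A) ^ 2 * ht - (↑y - ↑y⁻¹ : A) ^ 2 * hs - 4 * x.mul_inv
    - 4 * y.mul_inv

theorem map_coeffOne {A' F : Type*} [CommRing A'] [FunLike F A A'] [RingHomClass F A A'] (f : F) :
    f (coeffOne s t x y z) = coeffOne (f s) (f t) (x.map f) (y.map f) (z.map f) := by
  simp [coeffOne]

theorem map_coeffA {A' F : Type*} [CommRing A'] [FunLike F A A'] [RingHomClass F A A'] (f : F) :
    f (coeffA s x y z) = coeffA (f s) (x.map f) (y.map f) (z.map f) := by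
  simp [coeffA]

theorem map_coeffB {A' F : Type*} [CommRing A'] [FunLike F A A'] [RingHomClass F A A'] (f : F) :
    f (coeffB t x y z) = coeffB (f t) (x.map f) (y.map f) (z.map f) := by
  simp [coeffB]

theorem map_coeffAB {A' F : Type*} [CommRing A'] [FunLike F A A'] [RingHomClass F A A'] (f : F) :
    f (coeffAB s t x y z) = coeffAB (f s) (f t) (x.map f) (y.map f) (z.map f) := by
  simp [coeffAB]

end Laurent

section CrossedProduct

variable {K A B : Type*} [CommRing K] [CommRing A] [Ring B] [Algebra K A] [Algebra K B]
  {φ : A →ₐ[K] B} {σ τ : A →ₐ[K] A} {a b : B}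

/-- The multiplication rules of a crossed product of a commutative algebra `A` with the Klein
four-group: `a` and `b` act on the image of `A` through `σ` and `τ`, their squares are `x` and `y`,
and `c` is the value of the cocycle that measures the failure of `a` and `b` to commute. -/
structure IsKleinCrossed (φ : A →ₐ[K] B) (σ τ : A →ₐ[K] A) (a b : B) (x y c : A) : Prop where
  left_mul_map (u : A) : a * φ u = φ (σ u) * a
  right_mul_map (u : A) : b * φ u = φ (τ u) * b
  left_mul_left : a * a = φ x
  right_mul_right : b * b = φ y
  right_mul_left : b * a = φ c * (a * b)

namespace IsKleinCrossed

variable {x y c : A}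

theorem prod_mul_map (h : IsKleinCrossed φ σ τ a b x y c) (u : A) :
    a * b * φ u = φ (σ (τ u)) * (a * b) := by
  rw [mul_assoc, h.right_mul_map, ← mul_assoc, h.left_mul_map, mul_assoc]

theorem left_mul_prod (h : IsKleinCrossed φ σ τ a b x y c) : a * (a * b) = φ x * b := by
  rw [← mul_assoc, h.left_mul_left]

theorem prod_mul_right (h : IsKleinCrossed φ σ τ a b x y c) : a * b * b = φ (σ y) * a := by
  rw [mul_assoc, h.right_mul_right, h.left_mul_map]

theorem right_mul_prod (h : IsKleinCrossed φ σ τ a b x y c) : b * (a * b) = φ (c * σ y) * a := by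
  rw [← mul_assoc, h.right_mul_left, mul_assoc, h.prod_mul_right, ← mul_assoc, map_mul]

theorem prod_mul_left (h : IsKleinCrossed φ σ τ a b x y c) : a * b * a = φ (σ c * x) * b := by
  rw [mul_assoc, h.right_mul_left, ← mul_assoc, h.left_mul_map, mul_assoc, h.left_mul_prod,
    ← mul_assoc, map_mul]

theorem prod_mul_prod (h : IsKleinCrossed φ σ τ a b x y c) :
    a * b * (a * b) = φ (σ c * x * y) := by
  rw [← mul_assoc, h.prod_mul_left, mul_assoc, h.right_mul_right, ← map_mul]

theorem mul_eq (h : IsKleinCrossed φ σ τ a b x y c) (p q r w p' q' r' w' : A) :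
    (φ p + φ q * a + φ r * b + φ w * (a * b)) * (φ p' + φ q' * a + φ r' * b + φ w' * (a * b)) =
      φ (p * p' + q * σ q' * x + r * τ r' * y + w * σ (τ w') * (σ c * x * y))
        + φ (p * q' + q * σ p' + r * τ w' * (c * σ y) + w * σ (τ r') * σ y) * a
        + φ (p * r' + r * τ p' + q * σ w' * x + w * σ (τ q') * (σ c * x)) * b
        + φ (p * w' + q * σ r' + r * τ q' * c + w * σ (τ p')) * (a * b) := by
  have monomial_mul {g g' : B} {v v' : A} (hg : g * φ v = φ v' * g) (u : A) :
      φ u * g * (φ v * g') = φ (u * v') * (g * g') := by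
    rw [mul_assoc, ← mul_assoc g, hg, mul_assoc, ← mul_assoc, map_mul]
  have monomial_mul_map {g : B} {v v' : A} (hg : g * φ v = φ v' * g) (u : A) :
      φ u * g * φ v = φ (u * v') * g := by
    rw [mul_assoc, hg, ← mul_assoc, map_mul]
  simp only [add_mul, mul_add, monomial_mul (h.left_mul_map _), monomial_mul (h.right_mul_map _),
    monomial_mul (h.prod_mul_map _), monomial_mul_map (h.left_mul_map _),
    monomial_mul_map (h.right_mul_map _), monomial_mul_map (h.prod_mul_map _), h.left_mul_left,
    h.left_mul_prod, h.right_mul_right, h.right_mul_left, h.right_mul_prod, h.prod_mul_left,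
    h.prod_mul_right, h.prod_mul_prod, map_add, map_mul, mul_assoc]
  abel

end IsKleinCrossed

/-- The crossed product structure of the group ring of the Promislow group over its translation
lattice: each of `a` and `b` inverts two of the units `x`, `y`, `z`, which stand for `a²`, `b²`,
`(ab)²`, and `ba = x⁻¹yz⁻¹ab`. That `(ab)² = z` follows from these rules. -/
structure IsPromislowCrossed (φ : A →ₐ[K] B) (σ τ : A →ₐ[K] A) (a b : B) (x y z : Aˣ) : Prop
    extends IsKleinCrossed φ σ τ a b x y ↑(x⁻¹ * y * z⁻¹) where
  left_map_x : x.map (σ : A →* A) = x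
  left_map_y : y.map (σ : A →* A) = y⁻¹
  left_map_z : z.map (σ : A →* A) = z⁻¹
  right_map_x : x.map (τ : A →* A) = x⁻¹
  right_map_y : y.map (τ : A →* A) = y
  right_map_z : z.map (τ : A →* A) = z⁻¹

variable {x y z : Aˣ} {s t : K}

theorem IsPromislowCrossed.mul_eq (h : IsPromislowCrossed φ σ τ a b x y z)
    (p q r w p' q' r' w' : A) :
    (φ p + φ q * a + φ r * b + φ w * (a * b)) * (φ p' + φ q' * a + φ r' * b + φ w' * (a * b)) =
      φ (p * p' + q * σ q' * x + r * τ r' * y + w * σ (τ w') * z)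
        + φ (p * q' + q * σ p' + r * τ w' * (↑x⁻¹ * ↑z⁻¹) + w * σ (τ r') * ↑y⁻¹) * a
        + φ (p * r' + r * τ p' + q * σ w' * x + w * σ (τ q') * (↑y⁻¹ * z)) * b
        + φ (p * w' + q * σ r' + r * τ q' * (↑x⁻¹ * y * ↑z⁻¹) + w * σ (τ p')) * (a * b) := by
  have hσy : σ y = ↑y⁻¹ := congrArg Units.val h.left_map_y
  have map_cocycle : (x⁻¹ * y * z⁻¹).map (σ : A →* A) = x⁻¹ * y⁻¹ * z := by
    simp only [map_mul, map_inv, h.left_map_x, h.left_map_y, h.left_map_z, inv_inv]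
  have hσc : σ ↑(x⁻¹ * y * z⁻¹) = ↑(x⁻¹ * y⁻¹ * z) := congrArg Units.val map_cocycle
  have prod_prod : σ ↑(x⁻¹ * y * z⁻¹) * x * y = z := by
    rw [hσc]; push_cast; linear_combination z * y * ↑y⁻¹ * x.mul_inv + z * y.mul_inv
  have prod_left : σ ↑(x⁻¹ * y * z⁻¹) * x = ↑y⁻¹ * z := by
    rw [hσc]; push_cast; linear_combination ↑y⁻¹ * z * x.mul_inv
  have right_prod : ↑(x⁻¹ * y * z⁻¹) * σ y = ↑x⁻¹ * ↑z⁻¹ := by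
    rw [hσy]; push_cast; linear_combination ↑x⁻¹ * ↑z⁻¹ * y.mul_inv
  rw [h.toIsKleinCrossed.mul_eq, prod_prod, prod_left, right_prod, hσy]
  push_cast
  rfl

/-- The unit `α` in a crossed product of Promislow type. -/
def crossedUnit (φ : A →ₐ[K] B) (a b : B) (x y z : Aˣ) (s t : K) : B :=
  φ (coeffOne (algebraMap K A s) (algebraMap K A t) x y z)
    + s • (φ (coeffA (algebraMap K A s) x y z) * a)
    + t • (φ (coeffB (algebraMap K A t) x y z) * b)
    + (s * t) • (φ (coeffAB (algebraMap K A s) (algebraMap K A t) x y z) * (a * b))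

/-- The inverse `β` of `α` in a crossed product of Promislow type, expressed through the
coefficients of `α`. -/
def crossedUnitInv (φ : A →ₐ[K] B) (a b : B) (x y z : Aˣ) (s t : K) : B :=
  φ (coeffOne (algebraMap K A s) (algebraMap K A t) x⁻¹ y⁻¹ z⁻¹)
    + s • (φ (-coeffA (algebraMap K A s) x y z) * a)
    + t • (φ (-coeffB (algebraMap K A t) x y z) * b)
    + (s * t) • (φ (-z ^ 2 * coeffAB (algebraMap K A s) (algebraMap K A t) x y z) * (a * b))

end CrossedProduct

section GroupRing

theorem of_mul_mapDomainAlgHom {K L Γ : Type*} [CommSemiring K] [Monoid L] [Monoid Γ] {f : L →* Γ}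
    {σ : L →* L} {g : Γ} (h : ∀ l, SemiconjBy g (f l) (f (σ l))) (u : MonoidAlgebra K L) :
    MonoidAlgebra.of K Γ g * MonoidAlgebra.mapDomainAlgHom K K f u =
      MonoidAlgebra.mapDomainAlgHom K K f (MonoidAlgebra.mapDomainAlgHom K K σ u) *
        MonoidAlgebra.of K Γ g := by
  induction u using MonoidAlgebra.induction_linear with
  | zero => simp
  | add u v hu hv => simp only [map_add, mul_add, add_mul, hu, hv]
  | single l k => simp [MonoidAlgebra.single_mul_single, (h l).eq]

/-- The lattice `ℤ³` of translations in the Promislow group, written multiplicatively. -/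
abbrev TranslationLattice : Type := Multiplicative ℤ × Multiplicative ℤ × Multiplicative ℤ

/-- The first generator of the translation lattice, standing for `a²`. -/
def latticeX : TranslationLattice := (.ofAdd 1, 1, 1)

/-- The second generator of the translation lattice, standing for `b²`. -/
def latticeY : TranslationLattice := (1, .ofAdd 1, 1)

/-- The third generator of the translation lattice, standing for `(ab)²`. -/
def latticeZ : TranslationLattice := (1, 1, .ofAdd 1)

/-- The action of conjugation by `a` on the translation lattice. -/
def flipLeft : TranslationLattice →* TranslationLattice :=
  (MonoidHom.id _).prodMap (invMonoidHom.prodMap invMonoidHom)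

/-- The action of conjugation by `b` on the translation lattice. -/
def flipRight : TranslationLattice →* TranslationLattice :=
  invMonoidHom.prodMap ((MonoidHom.id _).prodMap invMonoidHom)

/-- The monomials of the Laurent polynomial ring `K[ℤ³]`, as units. -/
def latticeUnit (K : Type*) [CommSemiring K] :
    TranslationLattice →* (MonoidAlgebra K TranslationLattice)ˣ :=
  (Units.map (MonoidAlgebra.of K TranslationLattice)).comp toUnits.toMonoidHom

variable {Γ : Type*} [Group Γ] {a b : Γ} (ha : SemiconjBy a (b ^ 2) (b ^ 2)⁻¹)
  (hb : SemiconjBy b (a ^ 2) (a ^ 2)⁻¹)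

/-- The homomorphism `(i, j, k) ↦ a²ⁱ b²ʲ (ab)²ᵏ` that realises lattice elements in a group with
elements `a`, `b` satisfying the relations of the Promislow group. -/
def translation : TranslationLattice →* Γ :=
  (zpowersHom Γ (a ^ 2)).noncommCoprod
    ((zpowersHom Γ (b ^ 2)).noncommCoprod (zpowersHom Γ ((a * b) ^ 2))
      fun _ _ ↦ (commute_right_sq_mul_sq ha hb).zpow_zpow _ _)
    fun _ _ ↦ ((commute_sq_sq ha).zpow_zpow _ _).mul_right
      ((commute_left_sq_mul_sq ha hb).zpow_zpow _ _)

theorem translation_apply (l : TranslationLattice) :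
    translation ha hb l =
      (a ^ 2) ^ l.1.toAdd * ((b ^ 2) ^ l.2.1.toAdd * ((a * b) ^ 2) ^ l.2.2.toAdd) :=
  rfl

theorem semiconjBy_left_translation (l : TranslationLattice) :
    SemiconjBy a (translation ha hb l) (translation ha hb (flipLeft l)) := by
  have hx : SemiconjBy a (a ^ 2) (a ^ 2) := Commute.self_pow a 2
  simpa [translation_apply, flipLeft] using (hx.zpow_right l.1.toAdd).mul_right
    ((ha.zpow_right l.2.1.toAdd).mul_right
      ((semiconjBy_left_mul_sq ha hb).zpow_right l.2.2.toAdd))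

theorem semiconjBy_right_translation (l : TranslationLattice) :
    SemiconjBy b (translation ha hb l) (translation ha hb (flipRight l)) := by
  have hy : SemiconjBy b (b ^ 2) (b ^ 2) := Commute.self_pow b 2
  simpa [translation_apply, flipRight] using (hb.zpow_right l.1.toAdd).mul_right
    ((hy.zpow_right l.2.1.toAdd).mul_right
      ((semiconjBy_right_mul_sq ha hb).zpow_right l.2.2.toAdd))

theorem translation_latticeX : translation ha hb latticeX = a ^ 2 := by
  simp [translation_apply, latticeX]

theorem translation_latticeY : translation ha hb latticeY = b ^ 2 := by
  simp [translation_apply, latticeY]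

theorem translation_latticeZ : translation ha hb latticeZ = (a * b) ^ 2 := by
  simp [translation_apply, latticeZ]

theorem mapDomainAlgHom_latticeUnit {K M : Type*} [CommSemiring K] [Monoid M]
    (f : TranslationLattice →* M) (l : TranslationLattice) :
    MonoidAlgebra.mapDomainAlgHom K K f (latticeUnit K l : MonoidAlgebra K TranslationLattice) =
      MonoidAlgebra.of K M (f l) := by
  simp [latticeUnit]

theorem map_mapDomainAlgHom_latticeUnit {K : Type*} [CommSemiring K]
    {f : TranslationLattice →* TranslationLattice} {l l' : TranslationLattice} (h : f l = l') :
    (latticeUnit K l).map (MonoidAlgebra.mapDomainAlgHom K K f :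
      MonoidAlgebra K TranslationLattice →* MonoidAlgebra K TranslationLattice) =
        latticeUnit K l' :=
  Units.ext <| h ▸ mapDomainAlgHom_latticeUnit f l

theorem isPromislowCrossed_groupRing (K : Type*) [CommRing K] :
    IsPromislowCrossed (MonoidAlgebra.mapDomainAlgHom K K (translation ha hb))
      (MonoidAlgebra.mapDomainAlgHom K K flipLeft) (MonoidAlgebra.mapDomainAlgHom K K flipRight)
      (MonoidAlgebra.of K Γ a) (MonoidAlgebra.of K Γ b)
      (latticeUnit K latticeX) (latticeUnit K latticeY) (latticeUnit K latticeZ) where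
  left_mul_map := of_mul_mapDomainAlgHom (semiconjBy_left_translation ha hb)
  right_mul_map := of_mul_mapDomainAlgHom (semiconjBy_right_translation ha hb)
  left_mul_left := by
    rw [mapDomainAlgHom_latticeUnit, translation_latticeX, ← map_mul, pow_two]
  right_mul_right := by
    rw [mapDomainAlgHom_latticeUnit, translation_latticeY, ← map_mul, pow_two]
  right_mul_left := by
    simp only [← map_inv, ← map_mul, mapDomainAlgHom_latticeUnit]
    simp only [map_inv, map_mul, translation_latticeX, translation_latticeY, translation_latticeZ]
    simp only [← map_mul, ← mul_eq_sq_mul_mul hb]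
  left_map_x := map_mapDomainAlgHom_latticeUnit <| by simp [flipLeft, latticeX]
  left_map_y := by
    rw [← map_inv]; exact map_mapDomainAlgHom_latticeUnit <| by simp [flipLeft, latticeY]
  left_map_z := by
    rw [← map_inv]; exact map_mapDomainAlgHom_latticeUnit <| by simp [flipLeft, latticeZ]
  right_map_x := by
    rw [← map_inv]; exact map_mapDomainAlgHom_latticeUnit <| by simp [flipRight, latticeX]
  right_map_y := map_mapDomainAlgHom_latticeUnit <| by simp [flipRight, latticeY]
  right_map_z := by
    rw [← map_inv]; exact map_mapDomainAlgHom_latticeUnit <| by simp [flipRight, latticeZ]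

end GroupRing

section Presentation

theorem semiconjBy_inv_of_conj_mul_eq_one {Γ : Type*} [Group Γ] {g u : Γ}
    (h : g⁻¹ * u * g * u = 1) : SemiconjBy g u u⁻¹ := by
  have conj_eq : g⁻¹ * u * g = u⁻¹ := eq_inv_of_mul_eq_one_left h
  have : SemiconjBy g u⁻¹ u := by
    rw [← conj_eq, SemiconjBy]; group
  simpa using this.inv_right

theorem semiconjBy_pa : SemiconjBy pa (pb ^ 2) (pb ^ 2)⁻¹ :=
  semiconjBy_inv_of_conj_mul_eq_one <|
    PresentedGroup.one_of_mem (rels := Prels) (Set.mem_insert_of_mem _ rfl)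

theorem semiconjBy_pb : SemiconjBy pb (pa ^ 2) (pa ^ 2)⁻¹ :=
  semiconjBy_inv_of_conj_mul_eq_one <|
    PresentedGroup.one_of_mem (rels := Prels) (Set.mem_insert _ _)

theorem s_pow_four : s ^ 4 = -1 :=
  eq_neg_iff_add_eq_zero.2 <|
    Ideal.Quotient.eq_zero_iff_mem.2 (Ideal.subset_span (Set.mem_insert _ _))

theorem t_pow_four : t ^ 4 = -1 :=
  eq_neg_iff_add_eq_zero.2 <|
    Ideal.Quotient.eq_zero_iff_mem.2 (Ideal.subset_span (Set.mem_insert_of_mem _ rfl))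

/-- The map from Laurent polynomials in `x`, `y`, `z` over `R` to the group ring `R[P]`. -/
abbrev latticeMap : MonoidAlgebra Rr TranslationLattice →ₐ[Rr] MonoidAlgebra Rr P :=
  MonoidAlgebra.mapDomainAlgHom Rr Rr (translation semiconjBy_pa semiconjBy_pb)

/-- The Laurent variable over `R` that represents `a²`. -/
abbrev unitX : (MonoidAlgebra Rr TranslationLattice)ˣ := latticeUnit Rr latticeX

/-- The Laurent variable over `R` that represents `b²`. -/
abbrev unitY : (MonoidAlgebra Rr TranslationLattice)ˣ := latticeUnit Rr latticeY

/-- The Laurent variable over `R` that represents `(ab)²`. -/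
abbrev unitZ : (MonoidAlgebra Rr TranslationLattice)ˣ := latticeUnit Rr latticeZ

theorem G_mul (g h : P) : G (g * h) = G g * G h := map_mul _ g h

theorem G_pow (g : P) (n : ℕ) : G (g ^ n) = G g ^ n := map_pow _ g n

theorem G_px : G px = latticeMap unitX := by
  rw [mapDomainAlgHom_latticeUnit, translation_latticeX]; rfl

theorem G_py : G py = latticeMap unitY := by
  rw [mapDomainAlgHom_latticeUnit, translation_latticeY]; rfl

theorem G_pz : G pz = latticeMap unitZ := by
  rw [mapDomainAlgHom_latticeUnit, translation_latticeZ]; rfl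

theorem G_px_inv : G px⁻¹ = latticeMap ↑unitX⁻¹ := by
  rw [← map_inv, mapDomainAlgHom_latticeUnit, map_inv, translation_latticeX]; rfl

theorem G_py_inv : G py⁻¹ = latticeMap ↑unitY⁻¹ := by
  rw [← map_inv, mapDomainAlgHom_latticeUnit, map_inv, translation_latticeY]; rfl

theorem G_pz_inv : G pz⁻¹ = latticeMap ↑unitZ⁻¹ := by
  rw [← map_inv, mapDomainAlgHom_latticeUnit, map_inv, translation_latticeZ]; rfl

theorem smul_latticeMap (k : Rr) (u : MonoidAlgebra Rr TranslationLattice) :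
    k • latticeMap u = latticeMap (algebraMap Rr _ k * u) := by
  rw [← map_smul, Algebra.smul_def]

theorem α1_eq : α1 = latticeMap (coeffOne (algebraMap Rr _ s) (algebraMap Rr _ t)
    unitX unitY unitZ) := by
  simp only [α1, G_mul, G_px, G_py, G_px_inv, G_py_inv, G_pz_inv, smul_latticeMap,
    ← map_mul, ← map_add, ← map_sub, ← map_one latticeMap]
  refine congrArg latticeMap ?_
  simp only [coeffOne, map_pow]
  ring

theorem αa_eq : αa = latticeMap (coeffA (algebraMap Rr _ s) unitX unitY unitZ) := by
  simp only [αa, G_mul, G_px_inv, G_py, G_py_inv, G_pz, smul_latticeMap,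
    ← map_mul, ← map_add, ← map_sub, ← map_neg, ← map_one latticeMap]
  refine congrArg latticeMap ?_
  simp only [coeffA, map_pow]
  ring

theorem αb_eq : αb = latticeMap (coeffB (algebraMap Rr _ t) unitX unitY unitZ) := by
  simp only [αb, G_mul, G_pow, G_px, G_px_inv, G_py_inv, G_pz, smul_latticeMap,
    ← map_pow latticeMap, ← map_mul, ← map_add, ← map_sub]
  refine congrArg latticeMap ?_
  simp only [coeffB, map_pow]
  ring

theorem αab_eq : αab = latticeMap (coeffAB (algebraMap Rr _ s) (algebraMap Rr _ t)
    unitX unitY unitZ) := by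
  simp only [αab, G_mul, G_pow, G_px_inv, G_py, G_pz_inv, smul_latticeMap,
    ← map_pow latticeMap, ← map_mul latticeMap, ← map_add, ← map_sub, ← map_neg]
  refine congrArg latticeMap ?_
  simp only [coeffAB, map_pow, map_mul]
  ring

theorem β1_eq : β1 = latticeMap (coeffOne (algebraMap Rr _ s) (algebraMap Rr _ t)
    unitX⁻¹ unitY⁻¹ unitZ⁻¹) := by
  simp only [β1, G_mul, G_px, G_py, G_px_inv, G_py_inv, G_pz, smul_latticeMap,
    ← map_mul, ← map_add, ← map_sub, ← map_one latticeMap]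
  refine congrArg latticeMap ?_
  simp only [coeffOne, map_pow, inv_inv]
  ring

theorem βa_eq_neg : βa = -αa := by
  simp only [βa, αa]
  abel

theorem βb_eq_neg : βb = -αb := by
  simp only [βb, αb]
  abel

theorem βab_eq : βab = latticeMap (-unitZ ^ 2 *
    coeffAB (algebraMap Rr _ s) (algebraMap Rr _ t) unitX unitY unitZ) := by
  simp only [βab, G_mul, G_px_inv, G_py, G_pz, smul_latticeMap,
    ← map_mul latticeMap, ← map_add, ← map_sub, ← map_one latticeMap]
  refine congrArg latticeMap ?_
  have hz := unitZ.mul_inv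
  simp only [coeffAB, map_pow, map_mul]
  grind

theorem αU_eq_crossedUnit : αU = crossedUnit (A := MonoidAlgebra Rr TranslationLattice)
    latticeMap (G pa) (G pb) unitX unitY unitZ s t := by
  rw [αU, α1_eq, αa_eq, αb_eq, αab_eq, G_mul]
  rfl

theorem βU_eq_crossedUnitInv : βU = crossedUnitInv (A := MonoidAlgebra Rr TranslationLattice)
    latticeMap (G pa) (G pb) unitX unitY unitZ s t := by
  rw [βU, β1_eq, βa_eq_neg, βb_eq_neg, αa_eq, αb_eq, βab_eq, G_mul, ← map_neg, ← map_neg]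
  rfl

end Presentation

end Promislow

open Promislow in
theorem alpha_mul_beta_general {K A B : Type*} [CommRing K] [CommRing A] [Ring B] [Algebra K A]
    [Algebra K B] {φ : A →ₐ[K] B} {σ τ : A →ₐ[K] A} {a b : B} {x y z : Aˣ} {s t : K}
    (h : IsPromislowCrossed φ σ τ a b x y z) (hs : s ^ 4 = -1) (ht : t ^ 4 = -1) :
    crossedUnit φ a b x y z s t * crossedUnitInv φ a b x y z s t = 1 := by
  have smul_map_mul (k : K) (u : A) (g : B) : k • (φ u * g) = φ (algebraMap K A k * u) * g := by
    rw [← smul_mul_assoc, ← map_smul, Algebra.smul_def]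
  have eq_one_of_coeff {e₁ eₐ e_b e_ab : A} (h₁ : e₁ = 1) (hₐ : eₐ = 0) (h_b : e_b = 0)
      (h_ab : e_ab = 0) : φ e₁ + φ eₐ * a + φ e_b * b + φ e_ab * (a * b) = 1 := by
    simp [h₁, hₐ, h_b, h_ab]
  have hσ (u : Aˣ) : σ u = ↑(u.map (σ : A →* A)) := rfl
  have hτ (u : Aˣ) : τ u = ↑(u.map (τ : A →* A)) := rfl
  simp only [crossedUnit, crossedUnitInv, smul_map_mul]
  rw [h.mul_eq]
  simp only [map_mul, map_neg, map_pow, map_coeffOne, map_coeffA, map_coeffB, map_coeffAB, map_inv,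
    AlgHom.commutes, hσ, hτ, h.left_map_x, h.left_map_y, h.left_map_z, h.right_map_x,
    h.right_map_y, h.right_map_z, inv_inv]
  set S := algebraMap K A s with hS
  set T := algebraMap K A t with hT
  have hS4 : S ^ 4 = -1 := by rw [hS, ← map_pow, hs, map_neg, map_one]
  have hT4 : T ^ 4 = -1 := by rw [hT, ← map_pow, ht, map_neg, map_one]
  apply eq_one_of_coeff
  · linear_combination coeffOne_mul_coeffOne_inv_sub_norms x y z hS4 hT4
  · linear_combination S * coeffA S x y z * coeffOne_inv_left_sub S T x y z
      - S * T ^ 2 * coeffB_coeffAB_cross S x y z hT4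
  · linear_combination T * coeffB T x y z * coeffOne_inv_right_sub S T x y z
      - S ^ 2 * T * coeffA_coeffAB_cross T x y z hS4
  · linear_combination -S * T * coeffA_coeffB_cross x y z hS4 hT4

/-- In the group ring `R[P]`, the product `α·β` equals `1`. -/
theorem alpha_mul_beta : αU * βU = 1 := by
  rw [Promislow.αU_eq_crossedUnit, Promislow.βU_eq_crossedUnitInv]
  exact alpha_mul_beta_general
    (Promislow.isPromislowCrossed_groupRing Promislow.semiconjBy_pa Promislow.semiconjBy_pb Rr)
    Promislow.s_pow_four Promislow.t_pow_four
end
end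

section
/- Let ζ₈ ∈ ℂ be a primitive 8th root of unity and i = ζ₈². Then the element u = 1 + i(x − x⁻¹ − y + y⁻¹)z⁻¹ + ζ₈(−i·x⁻¹ + 1 − x⁻¹y⁻¹z + i·yz)·a + ζ₈(x⁻¹y⁻¹z − i·xz + i·y⁻¹z² − z²)·b + i(−i·x⁻¹ − i·y − 1 + x⁻¹y + i·x⁻¹z⁻¹ + i·yz⁻¹ − z⁻¹ + x⁻¹yz⁻¹)z⁻¹·(ab) is a unit of the group ring ℂ[P], and u is not a trivial unit. -/
noncomputable section

/-- The image of a group element in the group ring `ℂ[P]`. -/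
def Gc (g : P) : MonoidAlgebra ℂ P := MonoidAlgebra.of ℂ P g

/-- The explicit non-trivial unit of `ℂ[P]`, for a primitive 8th root of unity `ζ`
and `i = ζ²`. -/
def uC (ζ : ℂ) : MonoidAlgebra ℂ P :=
  1 + ζ ^ 2 • ((Gc px - Gc px⁻¹ - Gc py + Gc py⁻¹) * Gc pz⁻¹)
    + ζ • ((-(ζ ^ 2 • Gc px⁻¹) + 1 - Gc (px⁻¹ * py⁻¹ * pz) + ζ ^ 2 • Gc (py * pz)) * Gc pa)
    + ζ • ((Gc (px⁻¹ * py⁻¹ * pz) - ζ ^ 2 • Gc (px * pz) + ζ ^ 2 • Gc (py⁻¹ * pz ^ 2)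
        - Gc (pz ^ 2)) * Gc pb)
    + ζ ^ 2 • ((-(ζ ^ 2 • Gc px⁻¹) - ζ ^ 2 • Gc py - 1 + Gc (px⁻¹ * py)
        + ζ ^ 2 • Gc (px⁻¹ * pz⁻¹) + ζ ^ 2 • Gc (py * pz⁻¹) - Gc pz⁻¹
        + Gc (px⁻¹ * py * pz⁻¹)) * Gc pz⁻¹ * Gc (pa * pb))

/-!
The squares `x`, `y`, `z` commute and conjugation by `a` or `b` only inverts some of them, so any
element of a `K`-algebra built from `a` and `b` can be written `p + q a + r b + s ab` with
coefficients in the image of the commutative ring `K[ℤ³]`, on which `a` and `b` act by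
automorphisms.  In these coordinates the candidate inverse of `u = p + q a + r b + s ab` is
`p* - q a - r b + x⁻¹yz⁻¹ s* ab`, where `*` inverts `x`, `y` and `z`, and each of the two products
being `1` amounts to four identities of Laurent polynomials that only use `ζ⁴ = -1`.

Killing `y` and `z` maps `P` onto the infinite dihedral group.  The image of `u` has
coefficient `1` at the identity and `ζ²` at `x`, so `u` is not supported on a single group element.
-/

open MonoidAlgebra

/-- A pair of elements satisfying the defining relations `b⁻¹a²b = a⁻²` and `a⁻¹b²a = b⁻²` of the
Promislow group, each rearranged to say how a generator moves past the square of the other. -/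
structure IsPromislowPair {G : Type*} [Group G] (a b : G) : Prop where
  semiconjBy_sq_left : SemiconjBy b (a ^ 2) (a ^ 2)⁻¹
  semiconjBy_sq_right : SemiconjBy a (b ^ 2) (b ^ 2)⁻¹

section Group

variable {G H : Type*} [Group G] [Group H] {a b g : G}

lemma semiconjBy_inv_iff : SemiconjBy a g g⁻¹ ↔ a⁻¹ * g * a * g = 1 := by
  rw [SemiconjBy, eq_inv_mul_iff_mul_eq, mul_assoc a⁻¹, mul_assoc a⁻¹, inv_mul_eq_one, eq_comm,
    mul_assoc]

lemma semiconjBy_inv_left (h : SemiconjBy a g g⁻¹) : SemiconjBy a g⁻¹ g := by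
  simpa using h.inv_right

lemma commute_sq_of_semiconjBy_inv (h : SemiconjBy a g g⁻¹) : Commute (a ^ 2) g :=
  sq a ▸ (semiconjBy_inv_left h).mul_left h

lemma semiconjBy_zpow_neg (h : SemiconjBy a g g⁻¹) (n : ℤ) : SemiconjBy a (g ^ n) (g ^ (-n)) := by
  simpa using h.zpow_right n

namespace IsPromislowPair

lemma map (h : IsPromislowPair a b) (f : G →* H) : IsPromislowPair (f a) (f b) where
  semiconjBy_sq_left := by simpa using h.semiconjBy_sq_left.map f
  semiconjBy_sq_right := by simpa using h.semiconjBy_sq_right.map f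

lemma semiconjBy_left_mul_sq (h : IsPromislowPair a b) :
    SemiconjBy a ((a * b) ^ 2) ((a * b) ^ 2)⁻¹ := by
  rw [SemiconjBy, eq_inv_mul_iff_mul_eq]
  calc (a * b) ^ 2 * (a * (a * b) ^ 2)
      = a * b * a * (b * a ^ 2) * b * a * b := by simp only [sq, mul_assoc]
    _ = a * b * a⁻¹ * (b ^ 2 * a) * b := by
        rw [h.semiconjBy_sq_left.eq]; simp [sq, mul_assoc]
    _ = a * b * a⁻¹ * (a * (b ^ 2)⁻¹) * b := by
        rw [(semiconjBy_inv_left h.semiconjBy_sq_right).eq]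
    _ = a := by group

lemma semiconjBy_right_mul_sq (h : IsPromislowPair a b) :
    SemiconjBy b ((a * b) ^ 2) ((a * b) ^ 2)⁻¹ := by
  rw [SemiconjBy, eq_inv_mul_iff_mul_eq]
  calc (a * b) ^ 2 * (b * (a * b) ^ 2)
      = a * b * (a * b ^ 2) * a * b * a * b := by simp only [sq, mul_assoc]
    _ = a * b⁻¹ * (a ^ 2 * b) * a * b := by
        rw [h.semiconjBy_sq_right.eq]; simp [sq, mul_assoc]
    _ = a * b⁻¹ * (b * (a ^ 2)⁻¹) * a * b := by
        rw [(semiconjBy_inv_left h.semiconjBy_sq_left).eq]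
    _ = b := by group

lemma right_mul_left (h : IsPromislowPair a b) :
    b * a = (a ^ 2)⁻¹ * b ^ 2 * ((a * b) ^ 2)⁻¹ * (a * b) := by
  calc b * a = b * a ^ 2 * a⁻¹ := by group
    _ = (a ^ 2)⁻¹ * b * a⁻¹ := by rw [h.semiconjBy_sq_left.eq]
    _ = (a ^ 2)⁻¹ * b ^ 2 * ((a * b) ^ 2)⁻¹ * (a * b) := by simp [sq, mul_assoc]

end IsPromislowPair

end Group

section Coefficients

variable {K R R' : Type*} [CommRing K] [Ring R] [Algebra K R] [Ring R'] [Algebra K R']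

/-- The coefficient `p` of `u = p + q a + r b + s ab`, as a function of `x`, `y`, `z`, in an
arbitrary algebra. -/
def coeffOne (ζ : K) (x y z : Rˣ) : R :=
  1 + ζ ^ 2 • ((x - ↑x⁻¹ - y + ↑y⁻¹) * ↑z⁻¹)

/-- The coefficient `q` of `u = p + q a + r b + s ab`, as a function of `x`, `y`, `z`. -/
def coeffLeft (ζ : K) (x y z : Rˣ) : R :=
  ζ • (-(ζ ^ 2 • ↑x⁻¹) + 1 - ↑(x⁻¹ * y⁻¹ * z) + ζ ^ 2 • ↑(y * z))

/-- The coefficient `r` of `u = p + q a + r b + s ab`, as a function of `x`, `y`, `z`. -/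
def coeffRight (ζ : K) (x y z : Rˣ) : R :=
  ζ • (↑(x⁻¹ * y⁻¹ * z) - ζ ^ 2 • ↑(x * z) + ζ ^ 2 • ↑(y⁻¹ * z ^ 2) - ↑(z ^ 2))

/-- The coefficient `s` of `u = p + q a + r b + s ab`, as a function of `x`, `y`, `z`. -/
def coeffMul (ζ : K) (x y z : Rˣ) : R :=
  ζ ^ 2 • ((-(ζ ^ 2 • ↑x⁻¹) - ζ ^ 2 • ↑y - 1 + ↑(x⁻¹ * y) + ζ ^ 2 • ↑(x⁻¹ * z⁻¹)
    + ζ ^ 2 • ↑(y * z⁻¹) - ↑z⁻¹ + ↑(x⁻¹ * y * z⁻¹)) * ↑z⁻¹)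

/-- The coefficient of `ab` in the inverse of `u`, as a function of `x`, `y`, `z`. -/
def invCoeffMul (ζ : K) (x y z : Rˣ) : R :=
  ↑(x⁻¹ * y * z⁻¹) * coeffMul ζ x⁻¹ y⁻¹ z⁻¹

/-- The element `u = p + q a + r b + s ab`, where `x = a²`, `y = b²`, `z = (ab)²`, for arbitrary
units `a`, `b` of an algebra. -/
def gardamElement (ζ : K) (a b : Rˣ) : R :=
  coeffOne ζ (a ^ 2) (b ^ 2) ((a * b) ^ 2) + coeffLeft ζ (a ^ 2) (b ^ 2) ((a * b) ^ 2) * a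
    + coeffRight ζ (a ^ 2) (b ^ 2) ((a * b) ^ 2) * b
    + coeffMul ζ (a ^ 2) (b ^ 2) ((a * b) ^ 2) * (a * b)

lemma gardamElement_of_sq_eq_one {ζ : K} {a b : Rˣ} (hb : b ^ 2 = 1) (hab : (a * b) ^ 2 = 1) :
    gardamElement ζ a b = 1 + ζ ^ 2 • (↑(a ^ 2) - ↑(a ^ 2)⁻¹) + (ζ + ζ ^ 3) • (↑a - ↑a⁻¹)
      + ζ • ((↑(a ^ 2)⁻¹ - 1 - ζ ^ 2 • (↑(a ^ 2) - 1)) * ↑b)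
      + (2 * ζ ^ 2) • (↑((a ^ 2)⁻¹ * a * b) - ↑(a * b)) := by
  have inv_sq_mul_self : (↑(a ^ 2)⁻¹ * ↑a : R) = ↑a⁻¹ := by
    simp [← Units.val_mul, sq, mul_assoc]
  simp only [gardamElement, coeffOne, coeffLeft, coeffRight, coeffMul, hb, hab, inv_one, mul_one,
    one_mul, one_pow, Units.val_one, Units.val_mul, add_mul, sub_mul, neg_mul, smul_mul_assoc,
    ← mul_assoc, inv_sq_mul_self]
  module

variable (f : R →ₐ[K] R') (ζ : K) (x y z : Rˣ)

lemma map_coeffOne : f (coeffOne ζ x y z) =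
    coeffOne ζ (Units.map f x) (Units.map f y) (Units.map f z) := by
  simp [coeffOne, ← map_inv]

lemma map_coeffLeft : f (coeffLeft ζ x y z) =
    coeffLeft ζ (Units.map f x) (Units.map f y) (Units.map f z) := by
  simp [coeffLeft, ← map_inv]

lemma map_coeffRight : f (coeffRight ζ x y z) =
    coeffRight ζ (Units.map f x) (Units.map f y) (Units.map f z) := by
  simp [coeffRight, ← map_inv]

lemma map_coeffMul : f (coeffMul ζ x y z) =
    coeffMul ζ (Units.map f x) (Units.map f y) (Units.map f z) := by
  simp [coeffMul, ← map_inv]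

lemma map_invCoeffMul : f (invCoeffMul ζ x y z) =
    invCoeffMul ζ (Units.map f x) (Units.map f y) (Units.map f z) := by
  simp [invCoeffMul, map_coeffMul, ← map_inv]

lemma map_gardamElement (a b : Rˣ) :
    f (gardamElement ζ a b) = gardamElement ζ (Units.map f a) (Units.map f b) := by
  simp only [gardamElement, map_add, map_mul, map_pow, map_coeffOne, map_coeffLeft,
    map_coeffRight, map_coeffMul, Units.coe_map, MonoidHom.coe_coe]

end Coefficients

section CrossedProduct

variable {K S R : Type*} [CommRing K] [CommRing S] [Ring R] [Algebra K S] [Algebra K R]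

/-- The elements `A` and `B` of `R` multiply with each other and with the image of a commutative
algebra `S` as the generators of the Promislow group do with each other and with the translation
subgroup `⟨x, y, z⟩`; the endomorphisms `α` and `β` of `S` stand for conjugation by `A` and `B`. -/
structure IsCrossedProduct (f : S →ₐ[K] R) (α β : S →ₐ[K] S) (x y z : Sˣ) (A B : R) : Prop where
  left_mul_map (s : S) : A * f s = f (α s) * A
  right_mul_map (s : S) : B * f s = f (β s) * B
  left_mul_left : A * A = f x
  right_mul_right : B * B = f y
  right_mul_left : B * A = f ↑(x⁻¹ * y * z⁻¹) * (A * B)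
  left_x : Units.map (α : S →* S) x = x
  left_y : Units.map (α : S →* S) y = y⁻¹
  left_z : Units.map (α : S →* S) z = z⁻¹
  right_x : Units.map (β : S →* S) x = x⁻¹
  right_y : Units.map (β : S →* S) y = y
  right_z : Units.map (β : S →* S) z = z⁻¹

/-- The element `p + q A + r B + s AB` of `R`, with coefficients taken in `S` along `f`. -/
def crossedSum (f : S →ₐ[K] R) (A B : R) (p q r s : S) : R :=
  f p + f q * A + f r * B + f s * (A * B)

variable {f : S →ₐ[K] R} {α β : S →ₐ[K] S} {x y z : Sˣ} {A B : R}

lemma map_mul_crossedSum (t p q r s : S) :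
    f t * crossedSum f A B p q r s = crossedSum f A B (t * p) (t * q) (t * r) (t * s) := by
  simp only [crossedSum, map_mul, mul_add, mul_assoc]

lemma crossedSum_add (p q r s p' q' r' s' : S) :
    crossedSum f A B p q r s + crossedSum f A B p' q' r' s'
      = crossedSum f A B (p + p') (q + q') (r + r') (s + s') := by
  simp only [crossedSum, map_add, add_mul]
  abel

lemma crossedSum_one : crossedSum f A B 1 0 0 0 = 1 := by
  simp [crossedSum]

namespace IsCrossedProduct

variable (h : IsCrossedProduct f α β x y z A B)
include h

lemma right_mul_left_mul_right : B * (A * B) = f ↑(x⁻¹ * z⁻¹) * A := by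
  have left_y : α y = ↑y⁻¹ := congrArg Units.val h.left_y
  calc B * (A * B) = f ↑(x⁻¹ * y * z⁻¹) * (A * (B * B)) := by
        rw [← mul_assoc, h.right_mul_left]; simp only [mul_assoc]
    _ = f ↑(x⁻¹ * y * z⁻¹ * y⁻¹) * A := by
        rw [h.right_mul_right, h.left_mul_map, left_y, ← mul_assoc, ← map_mul, ← Units.val_mul]
    _ = f ↑(x⁻¹ * z⁻¹) * A := by rw [mul_right_comm, mul_inv_cancel_right]

lemma left_mul_crossedSum (p q r s : S) :
    A * crossedSum f A B p q r s = crossedSum f A B (x * α q) (α p) (x * α s) (α r) := by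
  simp only [crossedSum, mul_add, map_mul, mul_comm (x : S)]
  simp only [← mul_assoc, h.left_mul_map]
  simp only [mul_assoc _ A A, h.left_mul_left]
  abel

lemma right_mul_crossedSum (p q r s : S) :
    B * crossedSum f A B p q r s = crossedSum f A B (y * β r) (↑(x⁻¹ * z⁻¹) * β s) (β p)
      (↑(x⁻¹ * y * z⁻¹) * β q) := by
  simp only [crossedSum, mul_add, mul_comm _ (β _), map_mul f (β _)]
  simp only [← mul_assoc B (f _), h.right_mul_map]
  simp only [mul_assoc, h.right_mul_left, h.right_mul_left_mul_right, h.right_mul_right]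
  abel

lemma left_mul_right_mul_crossedSum (p q r s : S) :
    A * (B * crossedSum f A B p q r s) = crossedSum f A B (z * α (β s)) (↑y⁻¹ * α (β r))
      (↑(y⁻¹ * z) * α (β q)) (α (β p)) := by
  have left_x : α ↑x⁻¹ = ↑x⁻¹ := congrArg (fun u : Sˣ ↦ (↑u⁻¹ : S)) h.left_x
  have left_y : α y = ↑y⁻¹ := congrArg Units.val h.left_y
  have left_z : α ↑z⁻¹ = z := by
    simpa using congrArg (fun u : Sˣ ↦ (↑u⁻¹ : S)) h.left_z
  rw [h.right_mul_crossedSum, h.left_mul_crossedSum]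
  simp only [Units.val_mul, map_mul, left_x, left_y, left_z, mul_assoc, Units.mul_inv_cancel_left]

lemma crossedSum_mul_crossedSum (p q r s p' q' r' s' : S) :
    crossedSum f A B p q r s * crossedSum f A B p' q' r' s' = crossedSum f A B
      (p * p' + q * (x * α q') + r * (y * β r') + s * (z * α (β s')))
      (p * q' + q * α p' + r * (↑(x⁻¹ * z⁻¹) * β s') + s * (↑y⁻¹ * α (β r')))
      (p * r' + q * (x * α s') + r * β p' + s * (↑(y⁻¹ * z) * α (β q')))
      (p * s' + q * α r' + r * (↑(x⁻¹ * y * z⁻¹) * β q') + s * α (β p')) := by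
  rw [crossedSum]
  simp only [add_mul, mul_assoc (f _), mul_assoc A B, h.left_mul_right_mul_crossedSum]
  simp only [h.left_mul_crossedSum, h.right_mul_crossedSum, map_mul_crossedSum, crossedSum_add]

lemma crossedSum_coeff_mul_inv {ζ : K} (hζ : ζ ^ 4 = -1) :
    crossedSum f A B (coeffOne ζ x y z) (coeffLeft ζ x y z) (coeffRight ζ x y z)
        (coeffMul ζ x y z)
      * crossedSum f A B (coeffOne ζ x⁻¹ y⁻¹ z⁻¹) (-coeffLeft ζ x y z) (-coeffRight ζ x y z)
        (invCoeffMul ζ x y z) = 1 := by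
  have hω : algebraMap K S ζ ^ 4 = -1 := by rw [← map_pow, hζ, map_neg, map_one]
  have hx := x.mul_inv
  have hy := y.mul_inv
  have hz := z.mul_inv
  rw [h.crossedSum_mul_crossedSum, ← crossedSum_one (f := f) (A := A) (B := B)]
  simp only [map_neg, map_coeffOne, map_coeffLeft, map_coeffRight, map_invCoeffMul, map_inv,
    h.left_x, h.left_y, h.left_z, h.right_x, h.right_y, h.right_z, inv_inv]
  simp only [coeffOne, coeffLeft, coeffRight, coeffMul, invCoeffMul, Algebra.smul_def, map_pow,
    Units.val_mul, Units.val_pow_eq_pow_val, inv_inv]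
  congr 1 <;> grind

lemma crossedSum_inv_mul_coeff {ζ : K} (hζ : ζ ^ 4 = -1) :
    crossedSum f A B (coeffOne ζ x⁻¹ y⁻¹ z⁻¹) (-coeffLeft ζ x y z) (-coeffRight ζ x y z)
        (invCoeffMul ζ x y z)
      * crossedSum f A B (coeffOne ζ x y z) (coeffLeft ζ x y z) (coeffRight ζ x y z)
        (coeffMul ζ x y z) = 1 := by
  have hω : algebraMap K S ζ ^ 4 = -1 := by rw [← map_pow, hζ, map_neg, map_one]
  have hx := x.mul_inv
  have hy := y.mul_inv
  have hz := z.mul_inv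
  rw [h.crossedSum_mul_crossedSum, ← crossedSum_one (f := f) (A := A) (B := B)]
  simp only [map_coeffOne, map_coeffLeft, map_coeffRight, map_coeffMul, map_inv,
    h.left_x, h.left_y, h.left_z, h.right_x, h.right_y, h.right_z, inv_inv]
  simp only [coeffOne, coeffLeft, coeffRight, coeffMul, invCoeffMul, Algebra.smul_def, map_pow,
    Units.val_mul, Units.val_pow_eq_pow_val, inv_inv]
  congr 1 <;> grind

lemma isUnit_crossedSum_coeff {ζ : K} (hζ : ζ ^ 4 = -1) :
    IsUnit (crossedSum f A B (coeffOne ζ x y z) (coeffLeft ζ x y z) (coeffRight ζ x y z)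
      (coeffMul ζ x y z)) :=
  ⟨⟨_, _, h.crossedSum_coeff_mul_inv hζ, h.crossedSum_inv_mul_coeff hζ⟩, rfl⟩

end IsCrossedProduct

end CrossedProduct

section Translations

/-- The free abelian group `ℤ³`, written multiplicatively: the translation subgroup
`⟨x, y, z⟩` of the Promislow group. -/
abbrev TranslationLattice : Type := Multiplicative ℤ × Multiplicative ℤ × Multiplicative ℤ

/-- The action of `a` on the translation subgroup by conjugation. -/
def leftConj : TranslationLattice →* TranslationLattice :=
  (MonoidHom.id _).prodMap (invMonoidHom.prodMap invMonoidHom)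

/-- The action of `b` on the translation subgroup by conjugation. -/
def rightConj : TranslationLattice →* TranslationLattice :=
  invMonoidHom.prodMap ((MonoidHom.id _).prodMap invMonoidHom)

namespace IsPromislowPair

variable {G : Type*} [Group G] {a b : G} (h : IsPromislowPair a b)

/-- The homomorphism `(l, m, n) ↦ x ^ l * y ^ m * z ^ n`, where `x = a²`, `y = b²`, `z = (ab)²`. -/
def latticeHom : TranslationLattice →* G :=
  (zpowersHom G (a ^ 2)).noncommCoprod
    ((zpowersHom G (b ^ 2)).noncommCoprod (zpowersHom G ((a * b) ^ 2)) fun m n ↦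
      ((commute_sq_of_semiconjBy_inv h.semiconjBy_right_mul_sq).zpow_zpow m.toAdd n.toAdd))
    fun l _ ↦ ((commute_sq_of_semiconjBy_inv h.semiconjBy_sq_right).zpow_zpow l.toAdd _).mul_right
      ((commute_sq_of_semiconjBy_inv h.semiconjBy_left_mul_sq).zpow_zpow l.toAdd _)

lemma latticeHom_apply (n : TranslationLattice) : h.latticeHom n =
    (a ^ 2) ^ n.1.toAdd * ((b ^ 2) ^ n.2.1.toAdd * ((a * b) ^ 2) ^ n.2.2.toAdd) :=
  rfl

lemma semiconjBy_left_latticeHom (n : TranslationLattice) :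
    SemiconjBy a (h.latticeHom n) (h.latticeHom (leftConj n)) :=
  .mul_right (((Commute.refl a).pow_right 2).zpow_right _)
    (.mul_right (semiconjBy_zpow_neg h.semiconjBy_sq_right _)
      (semiconjBy_zpow_neg h.semiconjBy_left_mul_sq _))

lemma semiconjBy_right_latticeHom (n : TranslationLattice) :
    SemiconjBy b (h.latticeHom n) (h.latticeHom (rightConj n)) :=
  .mul_right (semiconjBy_zpow_neg h.semiconjBy_sq_left _)
    (.mul_right (((Commute.refl b).pow_right 2).zpow_right _)
      (semiconjBy_zpow_neg h.semiconjBy_right_mul_sq _))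

end IsPromislowPair

lemma semiconjBy_lift {K R N : Type*} [CommRing K] [Ring R] [Algebra K R] [Monoid N]
    {φ : N →* R} {σ : N →* N} {A : R} (h : ∀ n, SemiconjBy A (φ n) (φ (σ n))) (s : K[N]) :
    SemiconjBy A (lift K R N φ s) (lift K R N φ (mapDomainAlgHom K K σ s)) := by
  induction s using MonoidAlgebra.induction_linear with
  | zero => simp
  | add s t hs ht => simpa only [map_add] using hs.add_right ht
  | single n c => simpa using (h n).smul_right c

section GroupUnit

variable {K G H : Type*} [CommRing K] [Group G] [Group H]

/-- The embedding of a group into the units of its group ring. -/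
def groupUnit : G →* K[G]ˣ := (of K G).toHomUnits

lemma map_mapDomain_groupUnit (φ : G →* H) (g : G) :
    Units.map (mapDomainAlgHom K K φ : K[G] →* K[H]) (groupUnit g) = groupUnit (φ g) := by
  ext1
  simp [groupUnit]

end GroupUnit

section Coordinates

variable {K : Type*} [CommRing K]

/-- The coordinate `x` of `K[ℤ³]`. -/
def latticeX : K[TranslationLattice]ˣ := groupUnit (.ofAdd 1, 1, 1)

/-- The coordinate `y` of `K[ℤ³]`. -/
def latticeY : K[TranslationLattice]ˣ := groupUnit (1, .ofAdd 1, 1)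

/-- The coordinate `z` of `K[ℤ³]`. -/
def latticeZ : K[TranslationLattice]ˣ := groupUnit (1, 1, .ofAdd 1)

end Coordinates

namespace IsPromislowPair

variable {K R : Type*} [CommRing K] [Ring R] [Algebra K R] {a b : Rˣ}

variable (K) in
/-- The map from `K[ℤ³]` induced by `latticeHom`. -/
def latticeAlgHom (h : IsPromislowPair a b) : K[TranslationLattice] →ₐ[K] R :=
  lift K R TranslationLattice ((Units.coeHom R).comp h.latticeHom)

lemma map_latticeAlgHom_groupUnit (h : IsPromislowPair a b) (n : TranslationLattice) :
    Units.map (h.latticeAlgHom K : K[TranslationLattice] →* R) (groupUnit n) = h.latticeHom n := by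
  ext
  simp [latticeAlgHom, groupUnit]

lemma map_latticeAlgHom_latticeX (h : IsPromislowPair a b) :
    Units.map (h.latticeAlgHom K : K[TranslationLattice] →* R) latticeX = a ^ 2 := by
  simp [latticeX, map_latticeAlgHom_groupUnit, latticeHom_apply]

lemma map_latticeAlgHom_latticeY (h : IsPromislowPair a b) :
    Units.map (h.latticeAlgHom K : K[TranslationLattice] →* R) latticeY = b ^ 2 := by
  simp [latticeY, map_latticeAlgHom_groupUnit, latticeHom_apply]

lemma map_latticeAlgHom_latticeZ (h : IsPromislowPair a b) :
    Units.map (h.latticeAlgHom K : K[TranslationLattice] →* R) latticeZ = (a * b) ^ 2 := by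
  simp [latticeZ, map_latticeAlgHom_groupUnit, latticeHom_apply]

lemma isCrossedProduct (h : IsPromislowPair a b) :
    IsCrossedProduct (h.latticeAlgHom K) (mapDomainAlgHom K K leftConj)
      (mapDomainAlgHom K K rightConj) latticeX latticeY latticeZ (a : R) b where
  left_mul_map := semiconjBy_lift fun n ↦ (h.semiconjBy_left_latticeHom n).units_val
  right_mul_map := semiconjBy_lift fun n ↦ (h.semiconjBy_right_latticeHom n).units_val
  left_mul_left := by
    simpa [sq] using (congrArg Units.val (map_latticeAlgHom_latticeX (K := K) h)).symm
  right_mul_right := by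
    simpa [sq] using (congrArg Units.val (map_latticeAlgHom_latticeY (K := K) h)).symm
  right_mul_left := by
    have map_coeff : Units.map (h.latticeAlgHom K : K[TranslationLattice] →* R)
        (latticeX⁻¹ * latticeY * latticeZ⁻¹) = (a ^ 2)⁻¹ * b ^ 2 * ((a * b) ^ 2)⁻¹ := by
      simp only [map_mul, map_inv, map_latticeAlgHom_latticeX, map_latticeAlgHom_latticeY,
        map_latticeAlgHom_latticeZ]
    exact (congrArg Units.val h.right_mul_left).trans
      (congrArg (fun t : Rˣ ↦ (t * (a * b) : R)) map_coeff.symm)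
  left_x := by simp [latticeX, map_mapDomain_groupUnit, leftConj]
  left_y := by simp [latticeY, map_mapDomain_groupUnit, leftConj, ← map_inv]
  left_z := by simp [latticeZ, map_mapDomain_groupUnit, leftConj, ← map_inv]
  right_x := by simp [latticeX, map_mapDomain_groupUnit, rightConj, ← map_inv]
  right_y := by simp [latticeY, map_mapDomain_groupUnit, rightConj]
  right_z := by simp [latticeZ, map_mapDomain_groupUnit, rightConj, ← map_inv]

theorem isUnit_gardamElement (h : IsPromislowPair a b) {ζ : K} (hζ : ζ ^ 4 = -1) :
    IsUnit (gardamElement ζ a b) := by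
  simpa only [gardamElement, crossedSum, map_coeffOne, map_coeffLeft, map_coeffRight, map_coeffMul,
    map_latticeAlgHom_latticeX, map_latticeAlgHom_latticeY, map_latticeAlgHom_latticeZ]
    using h.isCrossedProduct.isUnit_crossedSum_coeff hζ

end IsPromislowPair

end Translations

section Nontriviality

open DihedralGroup

variable {K : Type*} [CommRing K]

lemma isPromislowPair_pa_pb : IsPromislowPair pa pb where
  semiconjBy_sq_left := semiconjBy_inv_iff.2 <|
    PresentedGroup.one_of_mem (rels := Prels) (Set.mem_insert _ _)
  semiconjBy_sq_right := semiconjBy_inv_iff.2 <|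
    PresentedGroup.one_of_mem (rels := Prels) (Set.mem_insert_of_mem _ rfl)

/-- The element `u` of the group ring `K[P]`. -/
def gardamUnit (ζ : K) : K[P] := gardamElement ζ (groupUnit pa) (groupUnit pb)

/-- The quotient map from `P` onto the infinite dihedral group that kills `y` and `z`. -/
def toDihedral : P →* DihedralGroup 0 :=
  PresentedGroup.toGroup (rels := Prels) (f := ![r 1, sr 0]) (by
    rintro _ (rfl | rfl) <;> simp [sq])

lemma toDihedral_pa : toDihedral pa = r 1 := by simp [toDihedral, pa]

lemma toDihedral_pb : toDihedral pb = sr 0 := by simp [toDihedral, pb]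

lemma mapDomain_gardamUnit (ζ : K) : mapDomainAlgHom K K toDihedral (gardamUnit ζ) =
    single (r 0) 1 + ζ ^ 2 • (single (r 2) 1 - single (r (-2)) 1)
      + (ζ + ζ ^ 3) • (single (r 1) 1 - single (r (-1)) 1)
      + ζ • (single (sr 2) 1 - single (sr 0) 1 - ζ ^ 2 • (single (sr (-2)) 1 - single (sr 0) 1))
      + (2 * ζ ^ 2) • (single (sr 1) 1 - single (sr (-1)) 1) := by
  have right_sq : groupUnit (K := K) (sr 0 : DihedralGroup 0) ^ 2 = 1 := by
    rw [← map_pow, sq, sr_mul_self, map_one]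
  have mul_sq : (groupUnit (K := K) (r 1 : DihedralGroup 0) * groupUnit (sr 0)) ^ 2 = 1 := by
    rw [← map_mul, ← map_pow, sq, r_mul_sr, sr_mul_self, map_one]
  have neg_one_add_two : (-1 + 2 : ZMod 0) = 1 := rfl
  rw [gardamUnit, map_gardamElement, map_mapDomain_groupUnit, map_mapDomain_groupUnit,
    toDihedral_pa, toDihedral_pb, gardamElement_of_sq_eq_one right_sq mul_sq]
  simp [groupUnit, ← map_inv, ← map_pow, sub_mul, neg_one_add_two, MonoidAlgebra.one_def]

lemma coeff_r_zero_mapDomain_gardamUnit (ζ : K) :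
    (mapDomainAlgHom K K toDihedral (gardamUnit ζ)).coeff (r 0) = 1 := by
  rw [mapDomain_gardamUnit]
  simp +decide [coeff_single, -r_zero]

lemma coeff_r_two_mapDomain_gardamUnit (ζ : K) :
    (mapDomainAlgHom K K toDihedral (gardamUnit ζ)).coeff (r 2) = ζ ^ 2 := by
  rw [mapDomain_gardamUnit]
  simp +decide [coeff_single, -r_zero]

lemma gardamUnit_ne_single [Nontrivial K] {ζ : K} (hζ : ζ ^ 4 = -1) (c : K) (g : P) :
    gardamUnit ζ ≠ single g c := by
  intro h
  have image_eq_of_coeff_ne_zero {d : DihedralGroup 0}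
      (hd : (mapDomainAlgHom K K toDihedral (gardamUnit ζ)).coeff d ≠ 0) : toDihedral g = d := by
    contrapose! hd
    simp [h, coeff_single, hd]
  have image_eq_r_zero : toDihedral g = r 0 := image_eq_of_coeff_ne_zero <| by
    rw [coeff_r_zero_mapDomain_gardamUnit]
    exact one_ne_zero
  have image_eq_r_two : toDihedral g = r 2 := image_eq_of_coeff_ne_zero <| by
    rw [coeff_r_two_mapDomain_gardamUnit]
    exact fun sq_eq_zero ↦ by simp [pow_mul ζ 2 2, sq_eq_zero] at hζ
  exact absurd (image_eq_r_zero.symm.trans image_eq_r_two) (by decide)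

theorem complex_nontrivial_unit_general [Nontrivial K] {ζ : K} (hζ : ζ ^ 4 = -1) :
    IsUnit (gardamUnit ζ) ∧ ¬∃ (c : Kˣ) (g : P), gardamUnit ζ = single g (c : K) :=
  ⟨(isPromislowPair_pa_pb.map groupUnit).isUnit_gardamElement hζ,
    fun ⟨c, g, h⟩ ↦ gardamUnit_ne_single hζ c g h⟩

lemma Gc_eq_groupUnit (g : P) : Gc g = groupUnit (K := ℂ) g := rfl

lemma uC_eq_gardamUnit (ζ : ℂ) : uC ζ = gardamUnit ζ := by
  simp only [uC, gardamUnit, gardamElement, coeffOne, coeffLeft, coeffRight, coeffMul,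
    Gc_eq_groupUnit, px, py, pz, map_mul, map_pow, map_inv, Units.val_mul, smul_mul_assoc]

end Nontriviality

/-- If `ζ₈` is a primitive 8th root of unity then the explicit element above is a
non-trivial unit of `ℂ[P]`. -/
theorem complex_nontrivial_unit (ζ : ℂ) (hζ : IsPrimitiveRoot ζ 8) :
    IsUnit (uC ζ) ∧
      ¬∃ (c : ℂˣ) (g : P), uC ζ = MonoidAlgebra.single g (c : ℂ) := by
  have pow_four : ζ ^ 4 = -1 :=
    (hζ.pow (by norm_num) (by norm_num : 8 = 4 * 2)).eq_neg_one_of_two_right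
  rw [uC_eq_gardamUnit]
  exact complex_nontrivial_unit_general pow_four
end
end
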